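/- Let R₃ be the unique positive root of R⁶+R⁵−4R⁴−8R³−10R²−6R−2 = 0 (R₃ ≈ 2.553), and suppose the step ratios satisfy 0 < r_k ≤ R' for all k ≥ 2, for some fixed R' < R₃. Let ϑ^{(3,n)}_{n−j} be the DOC kernels associated with the BDF3 kernels d^{(3,n)}_j = d_j(r_n, r_{n−1}) for j = 0,1,2 and d^{(3,n)}_j = 0 for j ≥ 3, defined by ϑ^{(3,n)}_0 = 1/d^{(3,n)}_0 and ϑ^{(3,n)}_{n−j} = −(1/d^{(3,j)}_0)·Σ_{i=j+1}^{n} ϑ^{(3,n)}_{n−i} d^{(3,i)}_{i−j} for 3 ≤ j ≤ n−1. Then there exists a constant C₃ > 0, depending only on R' and independent of n, such that Σ_{j=3}^{n} |ϑ^{(3,n)}_{n−j}| ≤ C₃ for all n ≥ 3, and Σ_{j=i}^{n} |ϑ^{(3,j)}_{j−i}| ≤ C₃ for all n ≥ i ≥ 3. -/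

import Mathlib

/-- BDF coefficient function `d₀(x,y)`. -/
noncomputable def d0 (x y : ℝ) : ℝ := (1 + 2*x)/(1 + x) + x*y/(1 + y + x*y)

/-- BDF coefficient function `d₁(x,y)`. -/
noncomputable def d1 (x y : ℝ) : ℝ :=
  -(x/(1 + x)) - x*y/(1 + y + x*y) - (x*y^2/(1 + y + x*y)) * ((1 + x)/(1 + y))

/-- BDF coefficient function `d₂(x,y)`. -/
noncomputable def d2 (x y : ℝ) : ℝ := (x*y^2/(1 + y + x*y)) * ((1 + x)/(1 + y))

/-- The BDF3 kernels `d^{(3,n)}_j = d_j(r_n, r_{n-1})` for `j = 0,1,2`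
and `d^{(3,n)}_j = 0` for `j ≥ 3`. -/
noncomputable def dk3 (r : ℕ → ℝ) (n j : ℕ) : ℝ :=
  if j = 0 then d0 (r n) (r (n - 1))
  else if j = 1 then d1 (r n) (r (n - 1))
  else if j = 2 then d2 (r n) (r (n - 1))
  else 0


lemma aux_R3 (R : ℝ) (h : R^6 + R^5 - 4*R^4 - 8*R^3 - 10*R^2 - 6*R - 2 = 0) : R < 64/25 := by
  by_contra hc
  push Not at hc
  obtain ⟨t, ht, rfl⟩ : ∃ t : ℝ, 0 ≤ t ∧ R = 64/25 + t := ⟨R - 64/25, by linarith, by ring⟩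
  have h2 : 0 ≤ t^2 := by positivity
  have h3 : 0 ≤ t^3 := by positivity
  have h4 : 0 ≤ t^4 := by positivity
  have h5 : 0 ≤ t^5 := by positivity
  have h6 : 0 ≤ t^6 := by positivity
  ring_nf at h
  linarith

lemma aux_d0_ge (x y : ℝ) (hx : 0 < x) (hy : 0 < y) : 1 ≤ d0 x y := by
  unfold d0
  have h1 : 1 ≤ (1 + 2*x)/(1 + x) := by
    rw [le_div_iff₀ (by positivity)]; linarith
  have h2 : 0 ≤ x*y/(1 + y + x*y) := by positivity
  linarith

lemma aux_d0_le (x y : ℝ) (hx : 0 < x) (hy : 0 < y) : d0 x y ≤ 3 := by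
  unfold d0
  have h1 : (1 + 2*x)/(1 + x) ≤ 2 := by
    rw [div_le_iff₀ (by positivity)]; linarith
  have h2 : x*y/(1 + y + x*y) ≤ 1 := by
    rw [div_le_iff₀ (by positivity)]; linarith
  linarith

lemma aux_sum (x y : ℝ) (hx : 0 < x) : d0 x y + d1 x y + d2 x y = 1 := by
  have h : (1 + 2*x)/(1 + x) - x/(1+x) = 1 := by
    field_simp; ring
  unfold d0 d1 d2
  linarith

lemma aux_poly (x y : ℝ) (hx : 0 < x) (hy : 0 < y) (hx2 : x ≤ 64/25) (hy2 : y ≤ 64/25) :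
    x^2*y^3*(1+x)^2 ≤ 9/5*((1+y+3*(x*y))*(1+y+x*y)*(1+y)) := by
  have e : 89/64*y ≤ 1 + y := by linarith
  have h1 : (89/64*y + 3*(x*y))*(89/64*y+x*y)*(89/64*y) ≤ (1+y+3*(x*y))*(1+y+x*y)*(1+y) := by
    gcongr
  have h2 : x^2*(1+x)^2 ≤ 9/5*((89/64+3*x)*(89/64+x)*(89/64)) := by
    have a1 : x*(1+x) ≤ (89/25)*x := by nlinarith
    have a2 : (x*(1+x))^2 ≤ ((89/25)*x)^2 := by gcongr
    have a3 : x^2 ≤ 64/25*x := by nlinarith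
    nlinarith
  have h3 : 0 ≤ y^3 := by positivity
  nlinarith [mul_le_mul_of_nonneg_left h2 h3]

lemma aux_key (x y : ℝ) (hx : 0 < x) (hy : 0 < y) (hx2 : x ≤ 64/25) (hy2 : y ≤ 64/25) :
    (d2 x y)^2 ≤ (2*d0 x y - 1 - 2*x/(1+x) - 1/10) * (2*y/(1+y)) := by
  have hS : 2*d0 x y - 1 - 2*x/(1+x) = (1+y+3*(x*y))/(1+y+x*y) := by
    unfold d0; field_simp; ring
  have hS1 : 1 ≤ (1+y+3*(x*y))/(1+y+x*y) := by
    have : 0 < x*y := by positivity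
    rw [le_div_iff₀ (by positivity)]; linarith
  rw [hS]
  have hf : 0 ≤ 2*y/(1+y) := by positivity
  have h1 : 9/10*((1+y+3*(x*y))/(1+y+x*y)) * (2*y/(1+y)) ≤
      ((1+y+3*(x*y))/(1+y+x*y) - 1/10) * (2*y/(1+y)) := by
    gcongr; linarith
  refine le_trans ?_ h1
  have hp := aux_poly x y hx hy hx2 hy2
  have e1 : (d2 x y)^2 = (x^2*y^3*(1+x)^2) * (y/((1+y+x*y)^2*(1+y)^2)) := by
    unfold d2; field_simp
  have e2 : 9/10*((1+y+3*(x*y))/(1+y+x*y)) * (2*y/(1+y)) =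
      (9/5*((1+y+3*(x*y))*(1+y+x*y)*(1+y))) * (y/((1+y+x*y)^2*(1+y)^2)) := by
    field_simp; ring
  rw [e1, e2]
  gcongr

/-- One step of the Lyapunov estimate, abstract form. -/
lemma aux_step (a b f g u v w : ℝ) (ha1 : 1 ≤ a) (ha3 : a ≤ 3) (hf : 0 ≤ f)
    (hg : 0 < g) (hT : 0 < 2*a - 1 - f - 1/10)
    (hk : b^2 ≤ (2*a - 1 - f - 1/10) * g)
    (hw : a * w = b * v - u) :
    (u + w)^2 + f * w^2 ≤ (1 - 1/90) * (u^2 + g * v^2) := by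
  set T := 2*a - 1 - f - 1/10 with hTd
  have hfe : f = 2*a - 1 - 1/10 - T := by rw [hTd]; ring
  have hV : 0 ≤ u^2 + g*v^2 := by positivity
  have hgg : 0 ≤ g - b^2/T := by
    rw [sub_nonneg, div_le_iff₀ hT]; linarith
  have hid : a^2 * ((u^2 + g*v^2) - ((u + w)^2 + f * w^2)) =
      1/10*u^2 + (g - b^2/T)*a^2*v^2 + (T*u - b*(a-1-f)*v)^2/T + b^2*(1+f)*(1/10)*v^2/T := by
    have e : a^2 * ((u^2 + g*v^2) - ((u + w)^2 + f * w^2)) =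
      a^2*(u^2 + g*v^2) - ((a*u + a*w)^2 + f * (a*w)^2) := by ring
    rw [e, hw, hfe]
    field_simp
    ring
  have h1 : 1/10 * (u^2 + g*v^2) ≤ a^2 * ((u^2 + g*v^2) - ((u + w)^2 + f * w^2)) := by
    rw [hid]
    have k1 : 0 ≤ (T*u - b*(a-1-f)*v)^2/T := by positivity
    have k2 : b^2*(1/10)*v^2/T ≤ b^2*(1+f)*(1/10)*v^2/T := by
      have : b^2*1*(1/10)*v^2/T ≤ b^2*(1+f)*(1/10)*v^2/T := by
        gcongr; linarith
      simpa using this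
    have k3 : (g - b^2/T)*(1/10)*v^2 ≤ (g - b^2/T)*a^2*v^2 := by
      gcongr; nlinarith
    have k4 : 1/10*(g*v^2) = (g - b^2/T)*(1/10)*v^2 + b^2*(1/10)*v^2/T := by ring
    linarith
  have ha9 : a^2 ≤ 9 := by nlinarith
  have hd : 0 ≤ (u^2 + g*v^2) - ((u + w)^2 + f * w^2) := by
    by_contra hc
    push Not at hc
    have : a^2 * ((u^2 + g*v^2) - ((u + w)^2 + f * w^2)) < 0 :=
      mul_neg_of_pos_of_neg (by positivity) hc
    linarith
  have h2 := mul_le_mul_of_nonneg_right ha9 hd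
  linarith

/-- exponential decay of a solution of the three-term recurrence -/
lemma aux_decay (r : ℕ → ℝ) (hr : ∀ k, 2 ≤ k → 0 < r k ∧ r k ≤ 64/25) (j : ℕ) (hj : 3 ≤ j)
    (u : ℕ → ℝ) (hu0 : u (j-1) = 0) (huj : |u j| ≤ 1)
    (hu : ∀ m, j ≤ m → d0 (r (m+1)) (r m) * u (m+1) + d1 (r (m+1)) (r m) * u m
      + d2 (r (m+1)) (r m) * u (m-1) = 0) (k : ℕ) :
    |u (j+k)| ≤ 2 * (1 - 1/180 : ℝ)^k := by
  have key : (u (j+k))^2 + (2*r (j+k)/(1+r (j+k))) * (u (j+k) - u (j+k-1))^2 ≤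
      3 * (1 - 1/90 : ℝ)^k := by
    induction k with
    | zero =>
      simp only [add_zero, hu0, pow_zero, sub_zero, mul_one]
      have hp := (hr j (by omega)).1
      have h2 : 2*r j/(1+r j) ≤ 2 := by
        rw [div_le_iff₀ (by positivity)]; linarith
      have h3 : (u j)^2 ≤ 1 := by
        rw [← sq_abs]; nlinarith [abs_nonneg (u j)]
      nlinarith [sq_nonneg (u j)]
    | succ k ih =>
      have hy := hr (j+k) (by omega)
      have hx := hr (j+k+1) (by omega)
      have hrec := hu (j+k) (by omega)
      have hsum := aux_sum (r (j+k+1)) (r (j+k)) hx.1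
      have hkey := aux_key _ _ hx.1 hy.1 hx.2 hy.2
      have hge := aux_d0_ge _ _ hx.1 hy.1
      have hle := aux_d0_le _ _ hx.1 hy.1
      have hT : 0 < 2*d0 (r (j+k+1)) (r (j+k)) - 1 - 2*r (j+k+1)/(1+r (j+k+1)) - 1/10 := by
        have hp := hx.1
        have hq := hy.1
        have : 2*d0 (r (j+k+1)) (r (j+k)) - 1 - 2*r (j+k+1)/(1+r (j+k+1))
          = 1 + 2*(r (j+k+1)*r (j+k)/(1+r (j+k)+r (j+k+1)*r (j+k))) := by
          unfold d0; field_simp; ring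
        rw [this]
        have : 0 ≤ r (j+k+1)*r (j+k)/(1+r (j+k)+r (j+k+1)*r (j+k)) := by positivity
        linarith
      have hst := aux_step (d0 (r (j+k+1)) (r (j+k))) (d2 (r (j+k+1)) (r (j+k)))
        (2*r (j+k+1)/(1+r (j+k+1))) (2*r (j+k)/(1+r (j+k))) (u (j+k)) (u (j+k) - u (j+k-1))
        (u (j+k+1) - u (j+k)) hge hle (by have := hx.1; positivity)
        (by have := hy.1; positivity) hT hkey (by
          have e : d1 (r (j+k+1)) (r (j+k)) =
            1 - d0 (r (j+k+1)) (r (j+k)) - d2 (r (j+k+1)) (r (j+k)) := by linarith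
          rw [e] at hrec
          linear_combination hrec)
      have e1 : u (j+k) + (u (j+k+1) - u (j+k)) = u (j+k+1) := by ring
      rw [e1] at hst
      have e2 : j + (k+1) = j+k+1 := rfl
      rw [e2, Nat.add_sub_cancel, pow_succ (1 - 1/90 : ℝ) k]
      linarith
  have hp := (hr (j+k) (by omega)).1
  have h1 : (u (j+k))^2 ≤ 3 * (1 - 1/90 : ℝ)^k := by
    have : 0 ≤ (2*r (j+k)/(1+r (j+k))) * (u (j+k) - u (j+k-1))^2 := by positivity
    linarith
  have h2 : (1 - 1/90 : ℝ)^k ≤ ((1 - 1/180 : ℝ)^k)^2 := by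
    rw [← pow_mul, mul_comm, pow_mul]
    gcongr <;> norm_num
  have h3 : 0 ≤ (1 - 1/180 : ℝ)^k := pow_nonneg (by norm_num) _
  refine abs_le_of_sq_le_sq ?_ (by positivity)
  nlinarith [sq_nonneg ((1 - 1/180 : ℝ)^k)]

lemma aux_down (p q s : ℕ → ℝ) (hp : ∀ j, 3 ≤ j → p j ≠ 0) (Z : ℕ → ℝ) (n : ℕ)
    (hZ : ∀ j, n < j → Z j = 0)
    (hL : ∀ j, 3 ≤ j → p j * Z j + q (j+1) * Z (j+1) + s (j+2) * Z (j+2) = 0) :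
    ∀ j, 3 ≤ j → Z j = 0 := by
  have H : ∀ k j, 3 ≤ j → n < j + k → Z j = 0 := by
    intro k
    induction k using Nat.strong_induction_on with
    | _ k ih =>
      intro j hj hk
      by_cases hn : n < j
      · exact hZ j hn
      · have a1 := ih (k-1) (by omega) (j+1) (by omega) (by omega)
        have a2 := ih (k-1) (by omega) (j+2) (by omega) (by omega)
        have := hL j hj
        rw [a1, a2] at this
        simpa [hp j hj] using this
  intro j hj
  exact H (n+1) j hj (by omega)

lemma aux_rowsum (r : ℕ → ℝ) (g : ℕ → ℝ) (n j : ℕ) (hjn : j < n) (hg : ∀ i, n < i → g i = 0) :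
    ∑ i ∈ Finset.Icc (j+1) n, g i * dk3 r i (i - j) =
      g (j+1) * d1 (r (j+1)) (r j) + g (j+2) * d2 (r (j+2)) (r (j+1)) := by
  have h1 : ∑ i ∈ Finset.Icc (j+1) n, g i * dk3 r i (i - j) =
      ∑ i ∈ Finset.Icc (j+1) (n+1), g i * dk3 r i (i - j) := by
    rw [Finset.sum_Icc_succ_top (by omega), hg (n+1) (by omega)]; ring
  have h2 : ∑ i ∈ ({j+1, j+2} : Finset ℕ), g i * dk3 r i (i - j) =
      ∑ i ∈ Finset.Icc (j+1) (n+1), g i * dk3 r i (i - j) := by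
    apply Finset.sum_subset
    · intro i hi
      simp only [Finset.mem_insert, Finset.mem_singleton] at hi
      rw [Finset.mem_Icc]; omega
    · intro i hi hi2
      simp only [Finset.mem_insert, Finset.mem_singleton] at hi2
      rw [Finset.mem_Icc] at hi
      have : dk3 r i (i-j) = 0 := by
        unfold dk3
        rw [if_neg (by omega), if_neg (by omega), if_neg (by omega)]
      rw [this, mul_zero]
  rw [h1, ← h2, Finset.sum_pair (by omega)]
  have e1 : j + 1 - j = 1 := by omega
  have e2 : j + 2 - j = 2 := by omega
  rw [e1, e2]
  simp [dk3]

lemma aux_bound (r : ℕ → ℝ) (hr : ∀ k, 2 ≤ k → 0 < r k ∧ r k ≤ 64/25) (ϑ : ℕ → ℕ → ℝ)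
    (hd : ∀ n, 3 ≤ n → ϑ n n = 1 / dk3 r n 0)
    (hrec : ∀ n j, 3 ≤ j → j < n →
          ϑ n j = -(1 / dk3 r j 0) * ∑ i ∈ Finset.Icc (j+1) n, ϑ n i * dk3 r i (i - j))
    (j k : ℕ) (hj : 3 ≤ j) : |ϑ (j+k) j| ≤ 2 * (1 - 1/180 : ℝ)^k := by
  set T : ℕ → ℕ → ℝ := fun n j => if j ≤ n then ϑ n j else 0 with hT
  set p : ℕ → ℝ := fun n => d0 (r n) (r (n-1)) with hp
  set q : ℕ → ℝ := fun n => d1 (r n) (r (n-1)) with hq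
  set s : ℕ → ℝ := fun n => d2 (r n) (r (n-1)) with hs
  have hp1 : ∀ n, 3 ≤ n → 1 ≤ p n := fun n hn =>
    aux_d0_ge _ _ (hr n (by omega)).1 (hr (n-1) (by omega)).1
  have hdk : ∀ n, dk3 r n 0 = p n := fun n => by simp [dk3, hp]
  have hTgt : ∀ m i, m < i → T m i = 0 := fun m i h => by
    simp only [hT]; rw [if_neg (by omega)]
  have hTle : ∀ m i, i ≤ m → T m i = ϑ m i := fun m i h => by
    simp only [hT]; rw [if_pos h]
  have hL : ∀ m i, 3 ≤ i → p i * T m i + q (i+1) * T m (i+1) + s (i+2) * T m (i+2) =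
      if i = m then 1 else 0 := by
    intro m i hi
    have hpi : p i ≠ 0 := by have := hp1 i hi; positivity
    rcases lt_trichotomy i m with h | h | h
    · rw [if_neg (by omega), hTle m i h.le, hrec m i hi h]
      have e : ∑ l ∈ Finset.Icc (i+1) m, ϑ m l * dk3 r l (l - i) =
          ∑ l ∈ Finset.Icc (i+1) m, T m l * dk3 r l (l - i) := by
        apply Finset.sum_congr rfl
        intro l hl
        rw [Finset.mem_Icc] at hl
        rw [hTle m l hl.2]
      rw [e, aux_rowsum r (T m) m i h (hTgt m), hdk]
      simp only [hq, hs, Nat.add_sub_cancel]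
      have e2 : i + 2 - 1 = i + 1 := by omega
      rw [e2]
      field_simp
      ring
    · subst h
      rw [if_pos rfl, hTgt i (i+1) (by omega), hTgt i (i+2) (by omega), hTle i i le_rfl,
        hd i hi, hdk]
      field_simp
      ring
    · rw [if_neg (by omega), hTgt m i h, hTgt m (i+1) (by omega), hTgt m (i+2) (by omega)]
      ring
  have hcol : ∀ n, 3 ≤ n → ∀ i, 3 ≤ i →
      p n * T n i + q n * T (n-1) i + s n * T (n-2) i - (if i = n then 1 else 0) = 0 := by
    intro n hn
    refine aux_down p q s (fun i hi => by have := hp1 i hi; positivity)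
      (fun i => p n * T n i + q n * T (n-1) i + s n * T (n-2) i - (if i = n then 1 else 0)) n
      ?_ ?_
    · intro i hi
      beta_reduce
      rw [hTgt n i hi, hTgt (n-1) i (by omega), hTgt (n-2) i (by omega), if_neg (by omega)]
      ring
    · intro i hi
      beta_reduce
      have a0 := hL n i hi
      have a1 := hL (n-1) i hi
      have a2 := hL (n-2) i hi
      have e : p n * (if i = n then (1:ℝ) else 0) + q n * (if i = n-1 then (1:ℝ) else 0)
          + s n * (if i = n-2 then (1:ℝ) else 0) = p i * (if i = n then (1:ℝ) else 0)
          + q (i+1) * (if i+1 = n then (1:ℝ) else 0) + s (i+2) * (if i+2 = n then (1:ℝ) else 0) := by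
        by_cases c0 : i = n
        · subst c0
          rw [if_pos rfl, if_neg (by omega), if_neg (by omega), if_neg (by omega),
            if_neg (by omega)]
          ring
        · by_cases c1 : i + 1 = n
          · subst c1
            rw [if_neg (by omega), if_pos (by omega), if_neg (by omega), if_pos rfl,
              if_neg (by omega)]
            ring
          · by_cases c2 : i + 2 = n
            · subst c2
              rw [if_neg (by omega), if_neg (by omega), if_pos (by omega), if_neg (by omega),
                if_pos rfl]
              ring
            · rw [if_neg c0, if_neg (by omega), if_neg (by omega), if_neg c1, if_neg c2]
              ring
      linear_combination p n * a0 + q n * a1 + s n * a2 + e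
  have hfin := aux_decay r hr j hj (fun m => T m j) (hTgt _ _ (by omega)) (by
      beta_reduce
      rw [hTle j j le_rfl, hd j hj, hdk]
      have := hp1 j hj
      rw [abs_of_nonneg (by positivity), div_le_one (by positivity)]
      exact this) (by
      intro m hm
      have := hcol (m+1) (by omega) j hj
      rw [if_neg (by omega)] at this
      simp only [hp, hq, hs, Nat.add_sub_cancel] at this
      have e2 : m + 1 - 2 = m - 1 := by omega
      rw [e2] at this
      linarith) k
  rwa [hTle _ _ (by omega)] at hfin

lemma aux_geom (N : ℕ) : ∑ k ∈ Finset.range N, 2 * (1 - 1/180 : ℝ)^k ≤ 360 := by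
  rw [← Finset.mul_sum, geom_sum_eq (by norm_num)]
  have : 0 ≤ (1 - 1/180 : ℝ)^N := pow_nonneg (by norm_num) _
  have e : ((1 - 1/180 : ℝ)^N - 1) / (1 - 1/180 - 1) = 180 * (1 - (1 - 1/180 : ℝ)^N) := by
    field_simp; ring
  rw [e]
  linarith

/-- Uniform boundedness of the BDF3 DOC kernels (Lemma 3.1): if all step ratios satisfy
`0 < r_k ≤ R' < R₃`, where `R₃` is the unique positive root of
`R⁶+R⁵-4R⁴-8R³-10R²-6R-2 = 0`, then there is a constant `C₃ > 0` depending only on `R'`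
(independent of `n`) such that, writing `ϑ n j` for `ϑ^{(3,n)}_{n-j}`,
`Σ_{j=3}^n |ϑ^{(3,n)}_{n-j}| ≤ C₃` for all `n ≥ 3` and
`Σ_{j=i}^n |ϑ^{(3,j)}_{j-i}| ≤ C₃` for all `n ≥ i ≥ 3`. -/
theorem bdf3_doc_bounded (R' R3 : ℝ) (hR3pos : 0 < R3)
    (hR3root : R3^6 + R3^5 - 4*R3^4 - 8*R3^3 - 10*R3^2 - 6*R3 - 2 = 0)
    (hR3uniq : ∀ x : ℝ, 0 < x → x^6 + x^5 - 4*x^4 - 8*x^3 - 10*x^2 - 6*x - 2 = 0 → x = R3)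
    (hR' : R' < R3) :
    ∃ C3 : ℝ, 0 < C3 ∧
      ∀ (r : ℕ → ℝ), (∀ k, 2 ≤ k → 0 < r k ∧ r k ≤ R') →
      ∀ (ϑ : ℕ → ℕ → ℝ),
        (∀ n, 3 ≤ n → ϑ n n = 1 / dk3 r n 0) →
        (∀ n j, 3 ≤ j → j < n →
          ϑ n j = -(1 / dk3 r j 0) * ∑ i ∈ Finset.Icc (j+1) n, ϑ n i * dk3 r i (i - j)) →
        (∀ n, 3 ≤ n → (∑ j ∈ Finset.Icc 3 n, |ϑ n j|) ≤ C3) ∧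
        (∀ n i, 3 ≤ i → i ≤ n → (∑ j ∈ Finset.Icc i n, |ϑ j i|) ≤ C3) := by
  have hlt := aux_R3 R3 hR3root
  refine ⟨360, by norm_num, ?_⟩
  intro r hr ϑ hd hrec
  have hr' : ∀ k, 2 ≤ k → 0 < r k ∧ r k ≤ 64/25 := fun k hk =>
    ⟨(hr k hk).1, by linarith [(hr k hk).2]⟩
  have hb := aux_bound r hr' ϑ hd hrec
  constructor
  · intro n hn
    refine le_trans ?_ (aux_geom (n + 1 - 3))
    rw [← Finset.sum_range_reflect, ← Finset.Ico_add_one_right_eq_Icc,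
      Finset.sum_Ico_eq_sum_range]
    apply Finset.sum_le_sum
    intro k hk
    rw [Finset.mem_range] at hk
    have := hb (3+k) (n + 1 - 3 - 1 - k) (by omega)
    have e : 3 + k + (n + 1 - 3 - 1 - k) = n := by omega
    rwa [e] at this
  · intro n i hi hin
    refine le_trans ?_ (aux_geom (n + 1 - i))
    rw [← Finset.Ico_add_one_right_eq_Icc, Finset.sum_Ico_eq_sum_range]
    apply Finset.sum_le_sum
    intro k hk
    exact hb i k hi
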